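/- Let Π be a transformation that is confluent and isomorphism-invariant, and let Π' be the transformation that applies Π exhaustively, i.e., F →_{Π'} F* iff F →_Π* F*. Then Π' is symmetry-preserving: for all F →_{Π'} F*, Aut_syn(F)_{{Lit(F*)}} = Aut_syn(F) and Aut_syn(F)↓_{Lit(F*)} ⊆ Aut_syn(F*). -/

import Mathlib

/-- A literal over a variable type `V`: a variable or its negation. -/
inductive Lit (V : Type) where
  | pos : V → Lit V
  | neg : V → Lit V
deriving DecidableEq

variable {V : Type} [DecidableEq V]

/-- Negation of a literal (so that double negation is the identity). -/
def Lit.negate : Lit V → Lit V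
  | .pos v => .neg v
  | .neg v => .pos v

/-- The underlying variable of a literal. -/
def Lit.var : Lit V → V
  | .pos v => v
  | .neg v => v

/-- A clause is a finite set of literals. -/
abbrev Clause (V : Type) := Finset (Lit V)

/-- A CNF formula is a finite set of clauses. -/
abbrev CNF (V : Type) := Finset (Clause V)

/-- `Var(F)`: the variables occurring in a formula. -/
def CNF.vars (F : CNF V) : Finset V := Finset.sup F (fun C => Finset.image Lit.var C)

/-- `Lit(F) = Var(F) ∪ {v̄ : v ∈ Var(F)}`. -/
def CNF.lits (F : CNF V) : Finset (Lit V) :=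
  Finset.image Lit.pos (CNF.vars F) ∪ Finset.image Lit.neg (CNF.vars F)

/-- The value of a literal under a complete assignment (given on the variables,
which determines a consistent complete assignment on all literals). -/
def Lit.val (σ : V → Bool) : Lit V → Bool
  | .pos v => σ v
  | .neg v => !(σ v)

/-- `C[σ]`: delete from `C` every literal mapped to `⊥` by `σ`
(i.e. keep `l` with `¬l ∉ σ`). -/
def Clause.reduce (σ : V → Bool) (C : Clause V) : Clause V :=
  Finset.filter (fun l => Lit.val σ (Lit.negate l) = false) C

/-- `F[σ]`: delete every clause containing a literal mapped to `⊤` by `σ`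
(for a complete assignment: every clause containing no false literal is kept)
and delete from each remaining clause every literal mapped to `⊥`. -/
def CNF.reduce (F : CNF V) (σ : V → Bool) : CNF V :=
  Finset.image (Clause.reduce σ) (Finset.filter (fun C => ∀ l ∈ C, Lit.val σ l = false) F)

/-- Apply a map on literals elementwise to clauses and formulas. -/
def CNF.map (φ : Lit V → Lit V) (F : CNF V) : CNF V :=
  Finset.image (fun C => Finset.image φ C) F

/-- `φ` is a syntactic symmetry of `F`: a bijection of `Lit(F)` respecting
negation with `φ(F) = F`. -/
def IsSynSym (F : CNF V) (φ : Lit V → Lit V) : Prop :=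
  Set.BijOn φ (CNF.lits F : Set (Lit V)) (CNF.lits F : Set (Lit V)) ∧
  (∀ l ∈ CNF.lits F, φ (Lit.negate l) = Lit.negate (φ l)) ∧
  CNF.map φ F = F

/-- `φ` is a semantic symmetry of `F`: a bijection of `Lit(F)` respecting
negation with `F[σ] = φ(F)[σ]` for every complete assignment `σ`. -/
def IsSemSym (F : CNF V) (φ : Lit V → Lit V) : Prop :=
  Set.BijOn φ (CNF.lits F : Set (Lit V)) (CNF.lits F : Set (Lit V)) ∧
  (∀ l ∈ CNF.lits F, φ (Lit.negate l) = Lit.negate (φ l)) ∧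
  ∀ σ : V → Bool, CNF.reduce F σ = CNF.reduce (CNF.map φ F) σ

/-- Extend a map defined on the literal set `S` by the identity outside `S`. -/
def extendId (S : Finset (Lit V)) (φ : Lit V → Lit V) : Lit V → Lit V :=
  fun l => if l ∈ S then φ l else l

/-- `F[l ↦ ⊤]`: delete every clause containing `l` and delete `l̄` from every
remaining clause. -/
def CNF.assignTrue (F : CNF V) (l : Lit V) : CNF V :=
  Finset.image (fun C => Finset.erase C (Lit.negate l)) (Finset.filter (fun C => l ∉ C) F)

/-- One application of a transformation `T`. -/
def TStep (T : CNF V → Set (CNF V)) (F F' : CNF V) : Prop := F' ∈ T F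

/-- Exhaustive application of `T`: a finite chain of applications ending in a
formula to which `T` is no longer applicable. -/
def TExhaust (T : CNF V → Set (CNF V)) (F Fs : CNF V) : Prop :=
  Relation.ReflTransGen (TStep T) F Fs ∧ T Fs = ∅

/-- `T` is confluent: exhaustive application yields a unique result. -/
def Confluent (T : CNF V → Set (CNF V)) : Prop :=
  ∀ F F₁ F₂ : CNF V, TExhaust T F F₁ → TExhaust T F F₂ → F₁ = F₂

/-- `T` is isomorphism-invariant: invariant under every negation-respecting
bijection of the literals over a finite superset of `Lit(F)` (equivalently,
every finitely supported negation-respecting bijection of all literals). -/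
def IsoInvariant (T : CNF V → Set (CNF V)) : Prop :=
  ∀ φ : Lit V → Lit V, Function.Bijective φ →
    (∀ l : Lit V, φ (Lit.negate l) = Lit.negate (φ l)) →
    {l : Lit V | φ l ≠ l}.Finite →
    ∀ F F' : CNF V, F' ∈ T F → CNF.map φ F' ∈ T (CNF.map φ F)

theorem aux_negneg (l : Lit V) : l.negate.negate = l := by cases l <;> rfl

theorem aux_mem_lits (F : CNF V) (l : Lit V) :
    l ∈ CNF.lits F ↔ ∃ C ∈ F, l ∈ C ∨ l.negate ∈ C := by
  have hv : ∀ v, v ∈ CNF.vars F ↔ ∃ C ∈ F, Lit.pos v ∈ C ∨ Lit.neg v ∈ C := by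
    intro v
    simp only [CNF.vars, Finset.mem_sup, Finset.mem_image]
    constructor
    · rintro ⟨C, hC, l, hl, rfl⟩
      cases l with
      | pos v => exact ⟨C, hC, Or.inl hl⟩
      | neg v => exact ⟨C, hC, Or.inr hl⟩
    · rintro ⟨C, hC, hl | hl⟩
      · exact ⟨C, hC, _, hl, rfl⟩
      · exact ⟨C, hC, _, hl, rfl⟩
  cases l with
  | pos v => simp [CNF.lits, Lit.negate, hv]
  | neg v => simp [CNF.lits, Lit.negate, hv, or_comm]

theorem aux_neg_mem (F : CNF V) (l : Lit V) :
    l.negate ∈ CNF.lits F ↔ l ∈ CNF.lits F := by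
  simp only [aux_mem_lits, aux_negneg, or_comm]

theorem aux_map_congr (F : CNF V) (f g : Lit V → Lit V)
    (h : ∀ l ∈ CNF.lits F, f l = g l) : CNF.map f F = CNF.map g F := by
  unfold CNF.map
  apply Finset.image_congr
  intro C hC
  apply Finset.image_congr
  intro l hl
  exact h l ((aux_mem_lits F l).2 ⟨C, hC, Or.inl hl⟩)

theorem aux_map_map (F : CNF V) (f g : Lit V → Lit V) :
    CNF.map f (CNF.map g F) = CNF.map (f ∘ g) F := by
  simp only [CNF.map, Finset.image_image]
  apply Finset.image_congr
  intro C hC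
  simp [Finset.image_image]

theorem aux_map_id (F : CNF V) : CNF.map id F = F := by
  simp [CNF.map]

theorem aux_lits_map (F : CNF V) (f : Lit V → Lit V)
    (hn : ∀ l : Lit V, f (Lit.negate l) = Lit.negate (f l)) {l : Lit V}
    (hl : l ∈ CNF.lits F) : f l ∈ CNF.lits (CNF.map f F) := by
  rw [aux_mem_lits] at hl ⊢
  obtain ⟨C, hC, h⟩ := hl
  refine ⟨C.image f, Finset.mem_image_of_mem _ hC, ?_⟩
  rw [← hn]
  exact h.imp (Finset.mem_image_of_mem _) (Finset.mem_image_of_mem _)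

theorem aux_vars_chain (T : CNF V → Set (CNF V))
    (hvars : ∀ F F' : CNF V, F' ∈ T F → CNF.vars F' ⊆ CNF.vars F)
    (F Fs : CNF V) (h : Relation.ReflTransGen (TStep T) F Fs) :
    CNF.lits Fs ⊆ CNF.lits F := by
  have : CNF.vars Fs ⊆ CNF.vars F := by
    induction h with
    | refl => exact subset_rfl
    | tail _ h ih => exact (hvars _ _ h).trans ih
  exact Finset.union_subset_union (Finset.image_subset_image this)
    (Finset.image_subset_image this)

theorem aux_main (T : CNF V → Set (CNF V))
    (hvars : ∀ F F' : CNF V, F' ∈ T F → CNF.vars F' ⊆ CNF.vars F)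
    (hconf : Confluent T) (hiso : IsoInvariant T)
    (F Fs : CNF V) (h : TExhaust T F Fs)
    (φ : Lit V → Lit V) (hφ : IsSynSym F φ) :
    CNF.map φ Fs = Fs ∧
      φ '' (CNF.lits Fs : Set (Lit V)) = (CNF.lits Fs : Set (Lit V)) := by
  obtain ⟨hb, hn, hm⟩ := hφ
  have hsub := aux_vars_chain T hvars F Fs h.1
  set ψ := extendId (CNF.lits F) φ with hψ
  have e1 : ∀ l ∈ CNF.lits F, ψ l = φ l := fun l hl => by simp [hψ, extendId, hl]
  have e2 : ∀ l, l ∉ CNF.lits F → ψ l = l := fun l hl => by simp [hψ, extendId, hl]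
  have e3 : ∀ l, ψ l ∈ CNF.lits F ↔ l ∈ CNF.lits F := by
    intro l
    by_cases hl : l ∈ CNF.lits F
    · rw [e1 l hl]; exact iff_of_true (hb.mapsTo hl) hl
    · rw [e2 l hl]
  have inj : Function.Injective ψ := by
    intro a b hab
    have hiff : a ∈ CNF.lits F ↔ b ∈ CNF.lits F := by rw [← e3 a, hab, e3]
    by_cases ha : a ∈ CNF.lits F
    · have hb' := hiff.1 ha
      rw [e1 a ha, e1 b hb'] at hab
      exact hb.injOn ha hb' hab
    · have hb' := fun x => ha (hiff.2 x)
      rwa [e2 a ha, e2 b hb'] at hab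
  have surj : Function.Surjective ψ := by
    intro b
    by_cases hbm : b ∈ CNF.lits F
    · obtain ⟨a, ha, rfl⟩ := hb.surjOn hbm
      exact ⟨a, e1 a ha⟩
    · exact ⟨b, e2 b hbm⟩
  have neg : ∀ l : Lit V, ψ (Lit.negate l) = Lit.negate (ψ l) := by
    intro l
    by_cases hl : l ∈ CNF.lits F
    · rw [e1 l hl, e1 _ ((aux_neg_mem F l).2 hl), hn l hl]
    · rw [e2 l hl, e2 _ (fun x => hl ((aux_neg_mem F l).1 x))]
  have fin : {l : Lit V | ψ l ≠ l}.Finite := by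
    apply (CNF.lits F).finite_toSet.subset
    intro l hl
    by_contra hc
    exact hl (e2 l hc)
  let e := Equiv.ofBijective ψ ⟨inj, surj⟩
  have ea : ∀ x, e x = ψ x := fun _ => rfl
  have neg' : ∀ l : Lit V, e.symm (Lit.negate l) = Lit.negate (e.symm l) := by
    intro l
    rw [Equiv.symm_apply_eq, ea, neg, ← ea, Equiv.apply_symm_apply]
  have fin' : {l : Lit V | e.symm l ≠ l}.Finite := by
    apply fin.subset
    intro l hl hc
    exact hl ((Equiv.symm_apply_eq e).2 hc.symm)
  have mm : ∀ G : CNF V, CNF.map e.symm (CNF.map ψ G) = G := by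
    intro G
    rw [aux_map_map]
    have : (e.symm ∘ ψ) = id := funext fun x => e.symm_apply_apply x
    rw [this, aux_map_id]
  have mF : CNF.map ψ F = F := (aux_map_congr F _ _ e1).trans hm
  have ch : Relation.ReflTransGen (TStep T) (CNF.map ψ F) (CNF.map ψ Fs) :=
    Relation.ReflTransGen.lift (CNF.map ψ)
      (fun a b hab => hiso ψ ⟨inj, surj⟩ neg fin a b hab) _ _ h.1
  have emp : T (CNF.map ψ Fs) = ∅ := by
    rw [Set.eq_empty_iff_forall_notMem]
    intro G hG
    have := hiso e.symm e.symm.bijective neg' fin' _ _ hG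
    rw [mm, h.2] at this
    exact this
  rw [mF] at ch
  have key : CNF.map ψ Fs = Fs := hconf F _ _ ⟨ch, emp⟩ h
  have key' : CNF.map e.symm Fs = Fs := by
    have := mm Fs
    rwa [key] at this
  refine ⟨(aux_map_congr Fs _ _ fun l hl => (e1 l (hsub hl)).symm).trans key, ?_⟩
  ext l
  constructor
  · rintro ⟨a, ha, rfl⟩
    have := aux_lits_map Fs ψ neg ha
    rw [key, e1 a (hsub ha)] at this
    exact this
  · intro hl
    have := aux_lits_map Fs e.symm neg' hl
    rw [key'] at this
    refine ⟨e.symm l, this, ?_⟩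
    rw [← e1 _ (hsub this)]
    exact e.apply_symm_apply l

/-- If a transformation `T` is confluent and
isomorphism-invariant, then exhaustive application of `T` is
symmetry-preserving: every syntactic symmetry of `F` setwise stabilizes
`Lit(F*)` (so `Aut_syn(F)_{{Lit(F*)}} = Aut_syn(F)`), and its restriction to
`Lit(F*)` is a syntactic symmetry of `F*`
(so `Aut_syn(F)↓_{Lit(F*)} ⊆ Aut_syn(F*)`). -/
theorem confluent_isoInvariant_exhaustive_symmetry_preserving
    (T : CNF V → Set (CNF V))
    (hvars : ∀ F F' : CNF V, F' ∈ T F → CNF.vars F' ⊆ CNF.vars F)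
    (hfin : ∀ F : CNF V, (T F).Finite)
    (hconf : Confluent T) (hiso : IsoInvariant T)
    (F Fs : CNF V) (h : TExhaust T F Fs) :
    (∀ φ : Lit V → Lit V, IsSynSym F φ →
        φ '' (CNF.lits Fs : Set (Lit V)) = (CNF.lits Fs : Set (Lit V))) ∧
    (∀ φ : Lit V → Lit V, IsSynSym F φ →
        φ '' (CNF.lits Fs : Set (Lit V)) = (CNF.lits Fs : Set (Lit V)) →
        IsSynSym Fs φ) := by
  refine ⟨fun φ hφ => (aux_main T hvars hconf hiso F Fs h φ hφ).2, fun φ hφ him => ?_⟩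
  have hsub := aux_vars_chain T hvars F Fs h.1
  refine ⟨⟨?_, hφ.1.injOn.mono hsub, him.ge⟩, fun l hl => hφ.2.1 l (hsub hl),
    (aux_main T hvars hconf hiso F Fs h φ hφ).1⟩
  intro l hl
  rw [← him]
  exact ⟨l, hl, rfl⟩
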